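/- For every integer n ≥ 3, the maximum number of triples in an S_1-free cgh on Ω_n satisfies ∇(n) + ⌊n/2⌋·⌊(n−2)/2⌋ ≤ ex_circ(n, S_1) ≤ ∇(n) + n². -/

import Mathlib

/-- The list of points of `ZMod n` occurs in this clockwise cyclic order:
anchored at the first point, the clockwise arc-distances from it are
positive and strictly increasing. -/
def CWList (n : ℕ) : List (ZMod n) → Prop
  | [] => True
  | a :: l => ((0 : ℕ) :: l.map fun b => (b - a).val).Chain' (· < ·)

/-- `H` is a 3-uniform (convex geometric) hypergraph on `Ω_n = ZMod n`. -/
def IsCgh (n : ℕ) (H : Finset (Finset (ZMod n))) : Prop :=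
  ∀ e ∈ H, e.card = 3

def nabla (n : ℕ) : ℕ :=
  if Odd n then n * (n - 1) * (n + 1) / 24 else n * (n - 2) * (n + 2) / 24

/-- `H` contains a copy of the configuration `S₁`: two triples sharing exactly
the vertex `v`, with the five vertices in clockwise cyclic order `v, a₁, a₂, b₁, b₂`. -/
def HasS1 (n : ℕ) (H : Finset (Finset (ZMod n))) : Prop :=
  ∃ v a₁ a₂ b₁ b₂ : ZMod n,
    CWList n [v, a₁, a₂, b₁, b₂] ∧
    ({v, a₁, a₂} : Finset (ZMod n)) ∈ H ∧ ({v, b₁, b₂} : Finset (ZMod n)) ∈ H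

/-- admissible pairs of offsets at a vertex whose pivot has offset `k` -/
def PP (n k i j : ℕ) : Prop :=
  (i ≤ k ∧ k ≤ j) ∨ (k < i ∧ 2 * i ≤ j) ∨ (j < k ∧ n + i ≤ 2 * j)

instance (n k i j : ℕ) : Decidable (PP n k i j) := by unfold PP; infer_instance

def pairsOf (n k : ℕ) : Finset (ℕ × ℕ) :=
  (Finset.range n ×ˢ Finset.range n).filter fun p => 1 ≤ p.1 ∧ p.1 < p.2 ∧ PP n k p.1 p.2

lemma sum_a (n : ℕ) (m k : ℕ) :
    4 * ∑ i ∈ Finset.Ico (k + 1) (k + 1 + m), (n - 2 * i) ≤ (n - 2 * k) ^ 2 := by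
  induction m generalizing k with
  | zero => simp
  | succ m ih =>
    rw [Finset.sum_eq_sum_Ico_succ_bot (by omega)]
    have h := ih (k + 1)
    rw [show k + 1 + (m + 1) = k + 1 + 1 + m by ring, mul_add]
    by_cases hk : 2 * (k + 1) ≤ n
    · obtain ⟨c, rfl⟩ := Nat.exists_eq_add_of_le hk
      rw [show 2 * (k + 1) + c - 2 * (k + 1) = c by omega] at *
      rw [show 2 * (k + 1) + c - 2 * k = c + 2 by omega]
      nlinarith
    · rw [show n - 2 * (k + 1) = 0 by omega] at *
      nlinarith [Nat.zero_le ((n - 2 * k) ^ 2)]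

lemma sum_b (n : ℕ) (k : ℕ) :
    4 * ∑ j ∈ Finset.range k, (2 * j - n) ≤ (2 * k - n) ^ 2 := by
  induction k with
  | zero => simp
  | succ k ih =>
    rw [Finset.sum_range_succ, mul_add]
    by_cases hk : n ≤ 2 * k
    · obtain ⟨c, hc⟩ := Nat.exists_eq_add_of_le hk
      rw [show 2 * k - n = c by omega] at *
      rw [show 2 * (k + 1) - n = c + 2 by omega]
      nlinarith
    · rw [show 2 * k - n = 0 by omega] at *
      nlinarith [Nat.zero_le ((2 * (k + 1) - n) ^ 2)]

lemma pairs_card (n k : ℕ) (hk : 1 ≤ k) (hkn : k < n) :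
    4 * (pairsOf n k).card ≤ n ^ 2 := by
  have hsub : pairsOf n k ⊆ (Finset.Icc 1 k ×ˢ Finset.Ico k n) ∪
      (((Finset.Ico (k + 1) (k + 1 + (n - k - 1))).sigma fun i => Finset.Ico (2 * i) n).image
        fun s => (s.1, s.2)) ∪
      (((Finset.range k).sigma fun j => Finset.Icc 1 (2 * j - n)).image fun s => (s.2, s.1)) := by
    intro p h
    obtain ⟨i, j⟩ := p
    rw [pairsOf, Finset.mem_filter] at h
    simp only [PP, Finset.mem_product, Finset.mem_range] at h
    simp only [Finset.mem_union, Finset.mem_image, Finset.mem_sigma, Finset.mem_product,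
      Finset.mem_Icc, Finset.mem_Ico, Finset.mem_range, Sigma.exists, Prod.mk.injEq]
    obtain ⟨⟨h1, h2⟩, h3, h4, h5 | h5 | h5⟩ := h
    · left; left; omega
    · left; right; exact ⟨i, j, by omega, rfl, rfl⟩
    · right; exact ⟨j, i, by omega, rfl, rfl⟩
  have h1 := (Finset.card_le_card hsub).trans ((Finset.card_union_le _ _).trans
    (Nat.add_le_add_right (Finset.card_union_le _ _) _))
  have h2 := (h1.trans (Nat.add_le_add (Nat.add_le_add_left Finset.card_image_le _)
    Finset.card_image_le))
  rw [Finset.card_product, Finset.card_sigma, Finset.card_sigma] at h2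
  simp only [Nat.card_Icc, Nat.card_Ico, Nat.add_sub_cancel] at h2
  have ha := sum_a n (n - k - 1) k
  have hb := sum_b n k
  obtain ⟨c, rfl⟩ := Nat.exists_eq_add_of_lt hkn
  rw [show k + c + 1 - k = c + 1 by omega] at *
  rcases le_total (2 * k) (k + c + 1) with h | h
  · rw [show 2 * k - (k + c + 1) = 0 by omega] at hb
    obtain ⟨d, hd⟩ := Nat.exists_eq_add_of_le h
    rw [show k + c + 1 - 2 * k = d by omega] at ha
    have hcd : k + c + 1 = 2 * k + d := by omega
    have hcd2 : c + 1 = k + d := by omega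
    rw [hcd2] at h2
    rw [hcd] at h2 ha hb ⊢
    rw [hcd2] at ha
    nlinarith
  · rw [show (k + c + 1) - 2 * k = 0 by omega] at ha
    obtain ⟨d, hd⟩ := Nat.exists_eq_add_of_le h
    rw [show 2 * k - (k + c + 1) = d by omega] at hb
    have : k = c + 1 + d := by omega
    subst this
    nlinarith

section
variable {n : ℕ} [NeZero n]

lemma exists_offsets (e : Finset (ZMod n)) (he : e.card = 3) (v : ZMod n) (hv : v ∈ e) :
    ∃ i j : ℕ, 1 ≤ i ∧ i < j ∧ j < n ∧ e = {v, v + i, v + j} := by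
  have h2 : (e.erase v).card = 2 := by rw [Finset.card_erase_of_mem hv, he]
  obtain ⟨x, y, hxy, hE⟩ := Finset.card_eq_two.1 h2
  have hx : x ≠ v := fun h => by
    have : x ∈ e.erase v := by rw [hE]; simp
    simp [h] at this
  have hy : y ≠ v := fun h => by
    have : y ∈ e.erase v := by rw [hE]; simp
    simp [h] at this
  have he' : e = {v, x, y} := by rw [← Finset.insert_erase hv, hE]
  have key : ∀ x : ZMod n, v + (((x - v).val : ℕ) : ZMod n) = x := by
    intro x; simp
  have pos : ∀ x : ZMod n, x ≠ v → 1 ≤ (x - v).val := by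
    intro x hx
    rw [Nat.one_le_iff_ne_zero, Ne, ZMod.val_eq_zero]
    exact sub_ne_zero.2 hx
  have hne : (x - v).val ≠ (y - v).val := fun h => hxy (by
    have := ZMod.val_injective n h
    exact sub_left_injective this)
  rcases lt_or_gt_of_ne hne with h | h
  · exact ⟨_, _, pos x hx, h, ZMod.val_lt _, by rw [key, key, he']⟩
  · exact ⟨_, _, pos y hy, h, ZMod.val_lt _, by rw [key, key, he', Finset.pair_comm]⟩

lemma exists_pivot (hn : 3 ≤ n) (H : Finset (Finset (ZMod n))) (hS : ¬ HasS1 n H) (v : ZMod n) :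
    ∃ k : ℕ, 1 ≤ k ∧ k < n ∧ ∀ i j : ℕ, 1 ≤ i → i < j → j < n →
      ({v, v + i, v + j} : Finset (ZMod n)) ∈ H → i ≤ k ∧ k ≤ j := by
  classical
  have hdis : ∀ i j i' j' : ℕ, 1 ≤ i → i < j → j < n → 1 ≤ i' → i' < j' → j' < n →
      ({v, v + i, v + j} : Finset (ZMod n)) ∈ H → ({v, v + i', v + j'} : Finset (ZMod n)) ∈ H →
      i' ≤ j := by
    intro i j i' j' h1 h2 h3 h4 h5 h6 hA hB
    by_contra hc
    push Not at hc
    refine hS ⟨v, v + i, v + j, v + i', v + j', ?_, hA, hB⟩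
    have hval : ∀ x : ℕ, x < n → (x : ZMod n).val = x := fun x hx => ZMod.val_cast_of_lt hx
    simp only [CWList, List.map, add_sub_cancel_left]
    rw [hval i (by omega), hval j (by omega), hval i' (by omega), hval j' (by omega)]
    simp [List.Chain']
    omega
  by_cases hne : ∃ i j : ℕ, 1 ≤ i ∧ i < j ∧ j < n ∧ ({v, v + i, v + j} : Finset (ZMod n)) ∈ H
  · obtain ⟨i0, j0, a1, a2, a3, a4⟩ := hne
    let S := (Finset.range n).filter fun i => 1 ≤ i ∧ ∃ j : ℕ, i < j ∧ j < n ∧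
      ({v, v + i, v + j} : Finset (ZMod n)) ∈ H
    have hi0 : i0 ∈ S := by
      simp only [S, Finset.mem_filter, Finset.mem_range]
      exact ⟨by omega, a1, j0, a2, a3, a4⟩
    obtain ⟨k, hk, hmax⟩ := Finset.exists_max_image S id ⟨i0, hi0⟩
    have hk' := hk
    simp only [S, Finset.mem_filter, Finset.mem_range] at hk'
    obtain ⟨b1, b2, jk, b3, b4, b5⟩ := hk'
    refine ⟨k, b2, b1, fun i j c1 c2 c3 c4 => ⟨?_, hdis i j k jk c1 c2 c3 b2 b3 b4 c4 b5⟩⟩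
    apply hmax i
    simp only [S, Finset.mem_filter, Finset.mem_range]
    exact ⟨by omega, c1, j, c2, c3, c4⟩
  · exact ⟨1, le_refl _, by omega, fun i j c1 c2 c3 c4 => absurd ⟨i, j, c1, c2, c3, c4⟩ hne⟩

def tri (n : ℕ) (s : Σ _ : ZMod n, ℕ × ℕ) : Finset (ZMod n) := {s.1, s.1 + s.2.1, s.1 + s.2.2}

lemma tri_card (v : ZMod n) (i j : ℕ) (hi : 1 ≤ i) (hij : i < j) (hj : j < n) :
    ({v, v + i, v + j} : Finset (ZMod n)).card = 3 := by
  have hval : ∀ x : ℕ, x < n → (x : ZMod n).val = x := fun x hx => ZMod.val_cast_of_lt hx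
  have h1 : (i : ZMod n) ≠ 0 := fun h => by
    have := congrArg ZMod.val h; rw [hval i (by omega), ZMod.val_zero] at this; omega
  have h2 : (j : ZMod n) ≠ 0 := fun h => by
    have := congrArg ZMod.val h; rw [hval j (by omega), ZMod.val_zero] at this; omega
  have h3 : (i : ZMod n) ≠ j := fun h => by
    have := congrArg ZMod.val h; rw [hval i (by omega), hval j hj] at this; omega
  rw [Finset.card_eq_three]
  refine ⟨v, v + i, v + j, ?_, ?_, ?_, rfl⟩
  · simpa using h1
  · simpa using h2
  · simpa using h3

lemma upper_core (hn : 3 ≤ n) (H : Finset (Finset (ZMod n))) (hH : IsCgh n H)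
    (hS : ¬ HasS1 n H) : 4 * (2 * H.card + n.choose 3) ≤ n ^ 3 := by
  classical
  choose k hk1 hkn hk using exists_pivot hn H hS
  let Q : Finset (Σ _ : ZMod n, ℕ × ℕ) := Finset.univ.sigma fun v => pairsOf n (k v)
  have memQ : ∀ v i j, (⟨v, (i, j)⟩ : Σ _ : ZMod n, ℕ × ℕ) ∈ Q ↔
      1 ≤ i ∧ i < j ∧ j < n ∧ PP n (k v) i j := by
    intro v i j
    simp only [Q, pairsOf, Finset.mem_sigma, Finset.mem_univ, Finset.mem_filter,
      Finset.mem_product, Finset.mem_range, true_and]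
    constructor
    · rintro ⟨⟨a, b⟩, c, d, e⟩; exact ⟨c, d, b, e⟩
    · rintro ⟨a, b, c, d⟩; exact ⟨⟨by omega, c⟩, a, b, d⟩
  have hQ : 4 * Q.card ≤ n ^ 3 := by
    rw [Finset.card_sigma, Finset.mul_sum]
    calc _ ≤ ∑ v : ZMod n, n ^ 2 := Finset.sum_le_sum fun v _ => pairs_card n (k v) (hk1 v) (hkn v)
      _ = n ^ 3 := by simp [ZMod.card]; ring
  set E := Finset.powersetCard 3 (Finset.univ : Finset (ZMod n)) with hE
  have hmaps : ∀ s ∈ Q, tri n s ∈ E := by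
    rintro ⟨v, i, j⟩ hs
    rw [memQ] at hs
    rw [hE, Finset.mem_powersetCard]
    exact ⟨Finset.subset_univ _, tri_card v i j hs.1 hs.2.1 hs.2.2.1⟩
  have hcount := Finset.card_eq_sum_card_fiberwise hmaps
  have hHE : H ⊆ E := fun e he => by
    rw [hE, Finset.mem_powersetCard]; exact ⟨Finset.subset_univ _, hH e he⟩
  have hpt : ∀ e ∈ E, (if e ∈ H then 2 else 0) + 1 ≤ (Q.filter fun s => tri n s = e).card := by
    intro e he
    have hc : e.card = 3 := (Finset.mem_powersetCard.1 he).2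
    split_ifs with h
    · rw [show 2 + 1 = e.card by rw [hc]]
      apply Finset.card_le_card_of_surjOn (fun s => s.1)
      intro v hv
      obtain ⟨i, j, h1, h2, h3, h4⟩ := exists_offsets e hc v hv
      refine ⟨⟨v, (i, j)⟩, ?_, rfl⟩
      rw [Finset.mem_coe, Finset.mem_filter, memQ]
      exact ⟨⟨h1, h2, h3, Or.inl (hk v i j h1 h2 h3 (h4 ▸ h))⟩, h4.symm⟩
    · rw [zero_add, Nat.one_le_iff_ne_zero, ← Nat.pos_iff_ne_zero, Finset.card_pos]
      obtain ⟨v, hv⟩ : e.Nonempty := Finset.card_pos.1 (by omega)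
      obtain ⟨i, j, h1, h2, h3, h4⟩ := exists_offsets e hc v hv
      have hor : PP n (k v) i j ∨ PP n (k (v + i)) (j - i) (n - i) ∨
          PP n (k (v + j)) (n - j) (n - j + i) := by
        have := hk1 v
        have := hk1 (v + i)
        have := hk1 (v + j)
        have := hkn v
        have := hkn (v + i)
        have := hkn (v + j)
        unfold PP
        omega
      have c1 : ((j - i : ℕ) : ZMod n) = j - i := by rw [Nat.cast_sub h2.le]
      have c2 : ((n - i : ℕ) : ZMod n) = - i := by rw [Nat.cast_sub (by omega)]; simp
      have c3 : ((n - j : ℕ) : ZMod n) = - j := by rw [Nat.cast_sub (by omega)]; simp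
      rcases hor with h | h | h
      · refine ⟨⟨v, (i, j)⟩, ?_⟩
        rw [Finset.mem_filter, memQ]
        exact ⟨⟨h1, h2, h3, h⟩, h4.symm⟩
      · refine ⟨⟨v + i, (j - i, n - i)⟩, ?_⟩
        rw [Finset.mem_filter, memQ]
        refine ⟨⟨by omega, by omega, by omega, h⟩, ?_⟩
        simp only [tri, c1, c2]
        rw [h4, show v + i + (j - i : ZMod n) = v + j by ring, show v + i + -(i : ZMod n) = v by ring]
        ext x; simp only [Finset.mem_insert, Finset.mem_singleton]; tauto
      · refine ⟨⟨v + j, (n - j, n - j + i)⟩, ?_⟩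
        rw [Finset.mem_filter, memQ]
        refine ⟨⟨by omega, by omega, by omega, h⟩, ?_⟩
        simp only [tri, Nat.cast_add, c3]
        rw [h4, show v + j + (-j + i : ZMod n) = v + i by ring,
          show v + j + -(j : ZMod n) = v by ring]
        ext x; simp only [Finset.mem_insert, Finset.mem_singleton]; tauto
  have hsum := Finset.sum_le_sum hpt
  rw [← hcount, Finset.sum_add_distrib, ← Finset.sum_filter, Finset.filter_mem_eq_inter,
    Finset.inter_eq_right.2 hHE] at hsum
  simp only [Finset.sum_const, smul_eq_mul, hE, Finset.card_powersetCard, Finset.card_univ,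
    ZMod.card, mul_one] at hsum
  omega

lemma upper (hn : 3 ≤ n) (H : Finset (Finset (ZMod n))) (hH : IsCgh n H)
    (hS : ¬ HasS1 n H) : H.card ≤ nabla n + n ^ 2 := by
  have h := upper_core hn H hH hS
  obtain ⟨m, rfl⟩ := Nat.exists_eq_add_of_le hn
  have hc : 6 * (3 + m).choose 3 = (m + 3) * (m + 2) * (m + 1) := by
    have := Nat.descFactorial_eq_factorial_mul_choose (3 + m) 3
    simp only [Nat.descFactorial, Nat.factorial] at this
    rw [show 3 + m - 0 = m + 3 by omega, show 3 + m - 1 = m + 2 by omega,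
      show 3 + m - 2 = m + 1 by omega] at this
    nlinarith
  have hnab : (m + 3) * (m + 1) * (m + 5) ≤ 24 * nabla (3 + m) + 23 := by
    unfold nabla
    rw [show 3 + m - 1 = m + 2 by omega, show 3 + m - 2 = m + 1 by omega]
    split_ifs
    · have : (m + 3) * (m + 1) * (m + 5) ≤ (3 + m) * (m + 2) * (3 + m + 1) := by nlinarith
      omega
    · have : (m + 3) * (m + 1) * (m + 5) = (3 + m) * (m + 1) * (3 + m + 2) := by ring
      omega
  nlinarith

/-- the arc from `x` to `y` is too long -/
def badArc (n : ℕ) (x y : ZMod n) : Prop :=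
  (n + 1) / 2 < (y - x).val ∨
    ((y - x).val = (n + 1) / 2 ∧ n ≤ x.val + (n + 1) / 2 ∧ n % 2 = 1)

open Classical in
noncomputable def lowerH (n : ℕ) [NeZero n] : Finset (Finset (ZMod n)) :=
  (Finset.univ : Finset (Finset (ZMod n))).filter fun e => e.card = 3 ∧
    ∀ x ∈ e, ∀ y ∈ e, badArc n x y → ∃ z ∈ e, z ≠ x ∧ (z - x).val < (y - x).val

lemma val_sub_cases (x y : ZMod n) :
    (x.val ≤ y.val ∧ (y - x).val = y.val - x.val) ∨
    (y.val < x.val ∧ (y - x).val = n + y.val - x.val) := by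
  rcases le_or_gt x.val y.val with h | h
  · exact Or.inl ⟨h, ZMod.val_sub h⟩
  · right
    refine ⟨h, ?_⟩
    have h1 := ZMod.val_sub h.le
    have h2 : y - x = -(x - y) := by ring
    have hx := ZMod.val_lt x
    have : NeZero (x - y) := ⟨fun h0 => by rw [h0, ZMod.val_zero] at h1; omega⟩
    rw [h2, ZMod.val_neg_of_ne_zero, h1]
    omega

lemma lower_free : ¬ HasS1 n (lowerH n) := by
  rintro ⟨v, a₁, a₂, b₁, b₂, hcw, hA, hB⟩
  simp only [lowerH, Finset.mem_filter, Finset.mem_univ, true_and] at hA hB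
  simp only [CWList, List.map] at hcw
  simp [List.Chain'] at hcw
  obtain ⟨h1, h2, h3, h4⟩ := hcw
  have e1 : ¬ badArc n a₂ v := by
    intro hb
    obtain ⟨z, hz, hne, hlt⟩ := hA.2 a₂ (by simp) v (by simp) hb
    simp only [Finset.mem_insert, Finset.mem_singleton] at hz
    have := ZMod.val_lt v
    have := ZMod.val_lt a₁
    have := ZMod.val_lt a₂
    rcases hz with rfl | rfl | rfl
    · omega
    · rcases val_sub_cases a₂ z with h | h <;> rcases val_sub_cases a₂ v with h' | h' <;>
      rcases val_sub_cases v z with h'' | h'' <;> rcases val_sub_cases v a₂ with h3' | h3' <;> omega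
    · exact hne rfl
  have e2 : ¬ badArc n v b₁ := by
    intro hb
    obtain ⟨z, hz, hne, hlt⟩ := hB.2 v (by simp) b₁ (by simp) hb
    simp only [Finset.mem_insert, Finset.mem_singleton] at hz
    rcases hz with rfl | rfl | rfl
    · exact hne rfl
    · omega
    · omega
  unfold badArc at e1 e2
  have := ZMod.val_lt v
  have := ZMod.val_lt a₂
  have := ZMod.val_lt b₁
  rcases val_sub_cases a₂ v with h' | h' <;>
      rcases val_sub_cases v b₁ with h'' | h'' <;> rcases val_sub_cases v a₂ with h3' | h3' <;> omega

lemma lower_mem (a b c : ℕ) (hab : a < b) (hbc : b < c) (hc : c < n)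
    (h1 : b - a ≤ (n + 1) / 2) (h2 : c - b ≤ (n + 1) / 2) (h3 : (n + 1) / 2 ≤ c - a) :
    ({(a : ZMod n), (b : ZMod n), (c : ZMod n)} : Finset (ZMod n)) ∈ lowerH n := by
  have va : (a : ZMod n).val = a := ZMod.val_cast_of_lt (by omega)
  have vb : (b : ZMod n).val = b := ZMod.val_cast_of_lt (by omega)
  have vc : (c : ZMod n).val = c := ZMod.val_cast_of_lt (by omega)
  generalize (a : ZMod n) = A at *
  generalize (b : ZMod n) = B at *
  generalize (c : ZMod n) = C at *
  have nab : A ≠ B := by rintro rfl; omega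
  have nbc : B ≠ C := by rintro rfl; omega
  have nac : A ≠ C := by rintro rfl; omega
  simp only [lowerH, Finset.mem_filter, Finset.mem_univ, true_and]
  refine ⟨Finset.card_eq_three.2 ⟨A, B, C, nab, nac, nbc, rfl⟩, ?_⟩
  have vAB := val_sub_cases A B
  have vBA := val_sub_cases B A
  have vAC := val_sub_cases A C
  have vCA := val_sub_cases C A
  have vBC := val_sub_cases B C
  have vCB := val_sub_cases C B
  intro x hx y hy hbad
  simp only [Finset.mem_insert, Finset.mem_singleton] at hx hy
  unfold badArc at hbad
  rcases hx with rfl | rfl | rfl <;> rcases hy with rfl | rfl | rfl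
  · simp at hbad; omega
  · omega
  · exact ⟨B, by simp, nab.symm, by omega⟩
  · exact ⟨C, by simp, nbc.symm, by omega⟩
  · simp at hbad; omega
  · omega
  · omega
  · exact ⟨A, by simp, nac, by omega⟩
  · simp at hbad; omega

lemma sorted_eq {a b c a' b' c' : ℕ} (h1 : a < b) (h2 : b < c) (h3 : a' < b') (h4 : b' < c')
    (m1 : a = a' ∨ a = b' ∨ a = c') (m2 : b = a' ∨ b = b' ∨ b = c')
    (m3 : c = a' ∨ c = b' ∨ c = c') : a = a' ∧ b = b' ∧ c = c' := by
  omega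

/-- index set for the lower bound: `c - a = n - 1 - k`, `b - a = t`, first vertex `a` -/
def idx (n : ℕ) : Finset (Σ _ : ℕ, ℕ × ℕ) :=
  (Finset.range (n - (n + 1) / 2)).sigma fun k => Finset.range (k + 1) ×ˢ
    Finset.Ico (max 1 (n - 1 - k - (n + 1) / 2)) (min (n - 1 - k) ((n + 1) / 2 + 1))

lemma idx_card (hn : 3 ≤ n) : (idx n).card ≤ (lowerH n).card := by
  apply Finset.card_le_card_of_injOn
    (fun s => ({((s.2.1 : ℕ) : ZMod n), ((s.2.1 + s.2.2 : ℕ) : ZMod n),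
      ((s.2.1 + (n - 1 - s.1) : ℕ) : ZMod n)} : Finset (ZMod n)))
  · rintro ⟨k, a, t⟩ hs
    simp only [idx, Finset.mem_coe, Finset.mem_sigma, Finset.mem_product, Finset.mem_range,
      Finset.mem_Ico] at hs
    show ({((a : ℕ) : ZMod n), ((a + t : ℕ) : ZMod n),
      ((a + (n - 1 - k) : ℕ) : ZMod n)} : Finset (ZMod n)) ∈ lowerH n
    apply lower_mem <;> omega
  · rintro ⟨k, a, t⟩ hs ⟨k', a', t'⟩ hs' heq
    simp only [idx, Finset.mem_coe, Finset.mem_sigma, Finset.mem_product, Finset.mem_range,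
      Finset.mem_Ico] at hs hs'
    have heq2 := congrArg (Finset.image ZMod.val) heq
    have hval : ∀ x : ℕ, x < n → (x : ZMod n).val = x := fun x hx => ZMod.val_cast_of_lt hx
    simp only [Finset.image_insert, Finset.image_singleton] at heq2
    rw [hval a (by omega), hval (a + t) (by omega), hval (a + (n - 1 - k)) (by omega),
      hval a' (by omega), hval (a' + t') (by omega), hval (a' + (n - 1 - k')) (by omega),
      Finset.ext_iff] at heq2
    simp only [Finset.mem_insert, Finset.mem_singleton] at heq2
    obtain ⟨g1, g2, g3⟩ := sorted_eq (by omega) (by omega) (by omega) (by omega)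
      ((heq2 a).1 (by simp)) ((heq2 (a + t)).1 (by simp)) ((heq2 (a + (n - 1 - k))).1 (by simp))
    have g4 : k = k' := by omega
    have g5 : t = t' := by omega
    subst g1 g5 g4
    rfl

lemma sum1 (m : ℕ) : 3 * ∑ k ∈ Finset.range m, (k + 1) * (k + 2) = m * (m + 1) * (m + 2) := by
  induction m with
  | zero => simp
  | succ m ih => rw [Finset.sum_range_succ, mul_add, ih]; ring

lemma sum2 (m : ℕ) :
    6 * ∑ k ∈ Finset.range m, (k + 1) * (k + 3) = m * (m + 1) * (2 * m + 7) := by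
  induction m with
  | zero => simp
  | succ m ih => rw [Finset.sum_range_succ, mul_add, ih]; ring

lemma idx_lower (hn : 3 ≤ n) : nabla n + (n / 2) * ((n - 2) / 2) ≤ (idx n).card := by
  rw [idx, Finset.card_sigma]
  simp only [Finset.card_product, Finset.card_range, Nat.card_Ico]
  unfold nabla
  rcases Nat.even_or_odd' n with ⟨h, rfl | rfl⟩
  · obtain ⟨m, rfl⟩ : ∃ m, h = m + 2 := ⟨h - 2, by omega⟩
    rw [if_neg (by rw [Nat.not_odd_iff_even]; exact even_two_mul _)]
    rw [show 2 * (m + 2) - (2 * (m + 2) + 1) / 2 = (m + 1) + 1 by omega, Finset.sum_range_succ]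
    rw [Finset.sum_congr rfl (g := fun k => (k + 1) * (k + 2)) (fun k hk => by
      rw [Finset.mem_range] at hk
      congr 1; omega)]
    have := sum1 (m + 1)
    rw [show min (2 * (m + 2) - 1 - (m + 1)) ((2 * (m + 2) + 1) / 2 + 1) -
      max 1 (2 * (m + 2) - 1 - (m + 1) - (2 * (m + 2) + 1) / 2) = m + 1 by omega,
      show 2 * (m + 2) / 2 = m + 2 by omega, show (2 * (m + 2) - 2) / 2 = m + 1 by omega,
      show 2 * (m + 2) - 2 = 2 * (m + 1) by omega]
    have h2 : 2 * (m + 2) * (2 * (m + 1)) * (2 * (m + 2) + 2) =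
      24 * ∑ k ∈ Finset.range (m + 1), (k + 1) * (k + 2) := by
      nlinarith [this]
    rw [h2, Nat.mul_div_cancel_left _ (by norm_num)]
  · obtain ⟨m, rfl⟩ : ∃ m, h = m + 1 := ⟨h - 1, by omega⟩
    rw [if_pos (odd_two_mul_add_one _)]
    rw [show 2 * (m + 1) + 1 - (2 * (m + 1) + 1 + 1) / 2 = m + 1 by omega, Finset.sum_range_succ]
    rw [Finset.sum_congr rfl (g := fun k => (k + 1) * (k + 3)) (fun k hk => by
      rw [Finset.mem_range] at hk
      congr 1; omega)]
    have := sum2 m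
    rw [show min (2 * (m + 1) + 1 - 1 - m) ((2 * (m + 1) + 1 + 1) / 2 + 1) -
      max 1 (2 * (m + 1) + 1 - 1 - m - (2 * (m + 1) + 1 + 1) / 2) = m + 1 by omega,
      show (2 * (m + 1) + 1) / 2 = m + 1 by omega, show (2 * (m + 1) + 1 - 2) / 2 = m by omega,
      show 2 * (m + 1) + 1 - 1 = 2 * (m + 1) by omega]
    have h2 : (2 * (m + 1) + 1) * (2 * (m + 1)) * (2 * (m + 1) + 1 + 1) + 24 * ((m + 1) * m) =
      24 * (∑ k ∈ Finset.range m, (k + 1) * (k + 3) + (m + 1) * (m + 1)) := by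
      nlinarith [this]
    omega

end

theorem ex_S1_bounds (n : ℕ) (hn : 3 ≤ n) :
    (∃ H : Finset (Finset (ZMod n)), IsCgh n H ∧ ¬ HasS1 n H ∧
      nabla n + (n / 2) * ((n - 2) / 2) ≤ H.card) ∧
    (∀ H : Finset (Finset (ZMod n)), IsCgh n H → ¬ HasS1 n H →
      H.card ≤ nabla n + n ^ 2) := by
  haveI : NeZero n := ⟨by omega⟩
  refine ⟨⟨lowerH n, ?_, lower_free, (idx_lower hn).trans (idx_card hn)⟩, fun H hH hS => upper hn H hH hS⟩
  intro e he
  simp only [lowerH, Finset.mem_filter, Finset.mem_univ, true_and] at he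
  exact he.1
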